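/- arXiv:2008.02839 — 6 statements merged into one kernel-verified Lean document; each statement's English description precedes it below -/
import Mathlib

section
/- For any two data points y, y' ∈ Y with ‖y' − y‖_Y ≤ δ₁, the corresponding unique minimizers satisfy the stability estimate ‖x̂_α(y') − x̂_α(y)‖_X ≤ β₁ δ₁ / (α ρ₀), where β₁ is an upper bound on the operator norm of A. -/
/-! The functional `J · y` is `2 α ρ₀`-strongly convex, so it grows quadratically away from its
minimizer: `J x y - J x̂ y ≥ α ρ₀ ‖x - x̂‖²` (`quadratic_growth`). Adding this inequality for
`(y, x̂)` evaluated at `x̂'` and for `(y', x̂')` evaluated at `x̂`, the regularizer and all the squared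
data terms cancel and what remains is
`α ρ₀ ‖x̂' - x̂‖² ≤ ⟪y' - y, A (x̂' - x̂)⟫ ≤ δ₁ β₁ ‖x̂' - x̂‖`. -/

lemma norm_sq_convex_comb {E : Type*} [NormedAddCommGroup E] [InnerProductSpace ℝ E]
    (u v : E) (t : ℝ) :
    ‖(1 - t) • u + t • v‖ ^ 2
      = (1 - t) * ‖u‖ ^ 2 + t * ‖v‖ ^ 2 - t * (1 - t) * ‖v - u‖ ^ 2 := by
  rw [norm_add_sq_real, norm_sub_sq_real, norm_smul, norm_smul, mul_pow, mul_pow,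
    Real.norm_eq_abs, Real.norm_eq_abs, sq_abs, sq_abs, real_inner_smul_left,
    real_inner_smul_right, real_inner_comm v u]
  ring

/-- Growth of the variational objective at a minimizer `x₀`. It follows by comparing `x₀` with
`(1 - t) x₀ + t x`, dividing by `t` and letting `t → 0⁺`; this limit is what yields the full
constant `α ρ₀`. -/
lemma quadratic_growth
    {X Y : Type*} [NormedAddCommGroup X] [InnerProductSpace ℝ X]
    [NormedAddCommGroup Y] [InnerProductSpace ℝ Y]
    (A : X →L[ℝ] Y) (R : X → ℝ) (hR : ConvexOn ℝ Set.univ R)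
    (ρ α : ℝ) (hα : 0 < α) (y : Y) (x₀ : X)
    (hmin : ∀ x : X, ‖y - A x₀‖ ^ 2 + α * (R x₀ + ρ * ‖x₀‖ ^ 2)
      ≤ ‖y - A x‖ ^ 2 + α * (R x + ρ * ‖x‖ ^ 2)) (x : X) :
    α * ρ * ‖x - x₀‖ ^ 2 ≤ (‖y - A x‖ ^ 2 + α * (R x + ρ * ‖x‖ ^ 2))
      - (‖y - A x₀‖ ^ 2 + α * (R x₀ + ρ * ‖x₀‖ ^ 2)) := by
  have key : ∀ t ∈ Set.Ioo (0 : ℝ) 1, (1 - t) * (α * ρ * ‖x - x₀‖ ^ 2) ≤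
      (‖y - A x‖ ^ 2 + α * (R x + ρ * ‖x‖ ^ 2))
      - (‖y - A x₀‖ ^ 2 + α * (R x₀ + ρ * ‖x₀‖ ^ 2)) := by
    rintro t ⟨ht0, ht1⟩
    have h1 := hmin ((1 - t) • x₀ + t • x)
    have h2 : R ((1 - t) • x₀ + t • x) ≤ (1 - t) * R x₀ + t * R x := by
      simpa using hR.2 (Set.mem_univ x₀) (Set.mem_univ x) (by linarith : 0 ≤ 1 - t) ht0.le
        (by ring)
    have h3 : y - A ((1 - t) • x₀ + t • x) = (1 - t) • (y - A x₀) + t • (y - A x) := by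
      rw [map_add, map_smul, map_smul]
      module
    rw [h3, norm_sq_convex_comb, norm_sq_convex_comb] at h1
    have h4 := mul_le_mul_of_nonneg_left h2 hα.le
    have h5 : 0 ≤ t * (1 - t) * ‖y - A x - (y - A x₀)‖ ^ 2 :=
      mul_nonneg (mul_nonneg ht0.le (by linarith)) (sq_nonneg _)
    refine le_of_mul_le_mul_left ?_ ht0
    linarith
  have hlim : Filter.Tendsto (fun t : ℝ => (1 - t) * (α * ρ * ‖x - x₀‖ ^ 2))
      (nhdsWithin 0 (Set.Ioi 0)) (nhds (α * ρ * ‖x - x₀‖ ^ 2)) := by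
    have hc : Continuous (fun t : ℝ => (1 - t) * (α * ρ * ‖x - x₀‖ ^ 2)) := by fun_prop
    simpa using (hc.tendsto 0).mono_left nhdsWithin_le_nhds
  refine le_of_tendsto hlim ?_
  filter_upwards [Ioo_mem_nhdsGT (zero_lt_one' ℝ)] with t ht using key t ht

/-- For any two data points `y, y' ∈ Y` with `‖y' − y‖ ≤ δ₁`, the corresponding
unique minimizers satisfy `‖x̂_α(y') − x̂_α(y)‖ ≤ β₁ δ₁ / (α ρ₀)`, where `β₁` bounds the
operator norm of `A`. -/
theorem stability_estimate
    {X Y : Type*} [NormedAddCommGroup X] [InnerProductSpace ℝ X]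
    [NormedAddCommGroup Y] [InnerProductSpace ℝ Y]
    (A : X →L[ℝ] Y) (β₁ : ℝ) (hβ₁ : ‖A‖ ≤ β₁)
    (R' : X → ℝ)
    (hR'conv : ConvexOn ℝ Set.univ R') (hR'lip : LipschitzWith 1 R')
    (ρ₀ α : ℝ) (hρ₀ : 0 < ρ₀) (hα : 0 < α)
    (J : X → Y → ℝ)
    (hJ : ∀ x y, J x y = ‖y - A x‖ ^ 2 + α * (R' x + ρ₀ * ‖x‖ ^ 2))
    (y y' : Y) (δ₁ : ℝ) (hδ₁ : ‖y' - y‖ ≤ δ₁)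
    (xhat xhat' : X)
    (hxhat : ∀ x : X, J xhat y ≤ J x y)
    (hxhat' : ∀ x : X, J xhat' y' ≤ J x y') :
    ‖xhat' - xhat‖ ≤ β₁ * δ₁ / (α * ρ₀) := by
  have g := quadratic_growth A R' hR'conv ρ₀ α hα y xhat
    (fun x => by simpa only [hJ] using hxhat x) xhat'
  have g' := quadratic_growth A R' hR'conv ρ₀ α hα y' xhat'
    (fun x => by simpa only [hJ] using hxhat' x) xhat
  rw [norm_sub_rev xhat xhat'] at g'
  have hcross : ‖y - A xhat'‖ ^ 2 - ‖y - A xhat‖ ^ 2 + ‖y' - A xhat‖ ^ 2 - ‖y' - A xhat'‖ ^ 2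
      = 2 * inner ℝ (y' - y) (A (xhat' - xhat)) := by
    simp only [norm_sub_sq_real, map_sub, inner_sub_left, inner_sub_right]
    ring
  have hδ : 0 ≤ δ₁ := (norm_nonneg _).trans hδ₁
  have hβ : 0 ≤ β₁ := (norm_nonneg _).trans hβ₁
  have hinner : inner ℝ (y' - y) (A (xhat' - xhat)) ≤ δ₁ * (β₁ * ‖xhat' - xhat‖) :=
    (real_inner_le_norm _ _).trans
      (mul_le_mul hδ₁ (A.le_of_opNorm_le hβ₁ _) (norm_nonneg _) hδ)
  rw [le_div_iff₀ (mul_pos hα hρ₀)]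
  rcases (norm_nonneg (xhat' - xhat)).eq_or_lt with h0 | hpos
  · rw [← h0, zero_mul]
    exact mul_nonneg hβ hδ
  · refine le_of_mul_le_mul_left ?_ hpos
    linarith
end

section
/- Let J = f + αg be μ-strongly convex with unique minimizer x̂, let x_k ∈ X with x_k ≠ x̂, z_k a nonzero subgradient of J at x_k, and let the optimal step size be η_k* = μ ‖x_k − x̂‖²_X / ‖z_k‖²_X. Then the update x_{k+1} = x_k − η_k* z_k satisfies ‖x_{k+1} − x̂‖²_X ≤ ‖x_k − x̂‖²_X − μ² ‖x_k − x̂‖⁴_X / ‖z_k‖²_X; in particular the squared error decreases strictly monotonically. -/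
/-!
Under strong convexity every subgradient inequality improves by the quadratic term
`μ / 2 * ‖u - x‖ ^ 2` (`StrongConvexOn.add_sq_le_of_subgradient`). Adding the improved inequality
for `zk` at `xk` (tested at `xhat`) to the one for the subgradient `0` at the minimizer `xhat`
(tested at `xk`) gives `μ * ‖xk - xhat‖ ^ 2 ≤ ⟪xk - xhat, zk⟫`. The estimate then follows by
expanding `‖xk - xhat - ηk • zk‖ ^ 2`; the step size `ηk` is the minimizer in `η` of the resulting
upper bound `‖xk - xhat‖ ^ 2 - 2 * η * μ * ‖xk - xhat‖ ^ 2 + η ^ 2 * ‖zk‖ ^ 2`.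
-/

open RealInnerProductSpace

/-- A subgradient of a strongly convex function satisfies the subgradient inequality with an
additional quadratic term: test the subgradient along the segment from `x` to `u`, and let the
parameter tend to `0`. -/
lemma StrongConvexOn.add_sq_le_of_subgradient
    {X : Type*} [NormedAddCommGroup X] [InnerProductSpace ℝ X]
    {J : X → ℝ} {μ : ℝ} (hsc : StrongConvexOn Set.univ μ J) {x z : X}
    (hz : ∀ u : X, J x + ⟪u - x, z⟫ ≤ J u) (u : X) :
    J x + ⟪u - x, z⟫ + μ / 2 * ‖u - x‖ ^ 2 ≤ J u := by
  have key : ∀ t ∈ Set.Ioo (0 : ℝ) 1,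
      J x + ⟪u - x, z⟫ + (1 - t) * (μ / 2 * ‖u - x‖ ^ 2) ≤ J u := by
    rintro t ⟨ht0, ht1⟩
    have h1 := hsc.2 (Set.mem_univ x) (Set.mem_univ u) (sub_nonneg.2 ht1.le) ht0.le
      (sub_add_cancel 1 t)
    have h2 := hz ((1 - t) • x + t • u)
    have h3 : (1 - t) • x + t • u - x = t • (u - x) := by module
    rw [h3, real_inner_smul_left] at h2
    rw [norm_sub_rev x u] at h1
    simp only [smul_eq_mul] at h1
    refine le_of_mul_le_mul_left ?_ ht0
    linarith
  have hlim : Filter.Tendsto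
      (fun t : ℝ => J x + ⟪u - x, z⟫ + (1 - t) * (μ / 2 * ‖u - x‖ ^ 2))
      (nhdsWithin 0 (Set.Ioi 0)) (nhds (J x + ⟪u - x, z⟫ + (1 - 0) * (μ / 2 * ‖u - x‖ ^ 2))) :=
    (Continuous.tendsto (by fun_prop) 0).mono_left nhdsWithin_le_nhds
  rw [sub_zero, one_mul] at hlim
  refine le_of_tendsto hlim ?_
  filter_upwards [Ioo_mem_nhdsGT (zero_lt_one' ℝ)] with t ht using key t ht

/-- For `J = f + αg` `μ`-strongly convex with unique minimizer `x̂`, `x_k ≠ x̂`,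
`z_k ≠ 0` a subgradient of `J` at `x_k`, and the optimal step size
`η_k* = μ ‖x_k − x̂‖² / ‖z_k‖²`, the update `x_{k+1} = x_k − η_k* z_k` satisfies
`‖x_{k+1} − x̂‖² ≤ ‖x_k − x̂‖² − μ² ‖x_k − x̂‖⁴ / ‖z_k‖²`; in particular the squared error
decreases strictly. -/
theorem optimal_step_strict_decrease
    {X : Type*} [NormedAddCommGroup X] [InnerProductSpace ℝ X] [CompleteSpace X]
    (f g : X → ℝ) (f' : X → X)
    (hfconv : ConvexOn ℝ Set.univ f)
    (hfgrad : ∀ x : X, HasGradientAt f (f' x) x)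
    (hgconv : ConvexOn ℝ Set.univ g)
    (α : ℝ) (hα : 0 < α)
    (J : X → ℝ) (hJ : ∀ x, J x = f x + α * g x)
    (μ : ℝ) (hμ : 0 < μ)
    (hsc : StrongConvexOn Set.univ μ J)
    (xhat : X) (hmin : ∀ x : X, J xhat ≤ J x)
    (xk zk : X) (hxk : xk ≠ xhat) (hzk0 : zk ≠ 0)
    (hzk : ∀ u : X, J u ≥ J xk + ⟪u - xk, zk⟫)
    (ηk : ℝ) (hηk : ηk = μ * ‖xk - xhat‖ ^ 2 / ‖zk‖ ^ 2)
    (xk1 : X) (hstep : xk1 = xk - ηk • zk) :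
    ‖xk1 - xhat‖ ^ 2 ≤ ‖xk - xhat‖ ^ 2 - μ ^ 2 * ‖xk - xhat‖ ^ 4 / ‖zk‖ ^ 2 ∧
      ‖xk1 - xhat‖ ^ 2 < ‖xk - xhat‖ ^ 2 := by
  have ha : 0 < ‖xk - xhat‖ := norm_pos_iff.2 (sub_ne_zero.2 hxk)
  have hz : 0 < ‖zk‖ := norm_pos_iff.2 hzk0
  have hinner : μ * ‖xk - xhat‖ ^ 2 ≤ ⟪xk - xhat, zk⟫ := by
    have h1 := hsc.add_sq_le_of_subgradient hzk xhat
    have h2 := hsc.add_sq_le_of_subgradient (x := xhat) (z := 0) (by simpa using hmin) xk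
    rw [← neg_sub xk xhat, inner_neg_left, norm_neg] at h1
    rw [inner_zero_right] at h2
    linarith
  have hη : 0 ≤ ηk := by rw [hηk]; positivity
  have hexp : ‖xk1 - xhat‖ ^ 2
      = ‖xk - xhat‖ ^ 2 - 2 * (ηk * ⟪xk - xhat, zk⟫) + ηk ^ 2 * ‖zk‖ ^ 2 := by
    rw [hstep, sub_right_comm, norm_sub_sq_real, real_inner_smul_right, norm_smul, mul_pow,
      Real.norm_eq_abs, sq_abs]
  have hopt : 2 * (ηk * (μ * ‖xk - xhat‖ ^ 2)) - ηk ^ 2 * ‖zk‖ ^ 2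
      = μ ^ 2 * ‖xk - xhat‖ ^ 4 / ‖zk‖ ^ 2 := by
    rw [hηk]; field_simp; ring
  have hmain : ‖xk1 - xhat‖ ^ 2 ≤ ‖xk - xhat‖ ^ 2 - μ ^ 2 * ‖xk - xhat‖ ^ 4 / ‖zk‖ ^ 2 := by
    have := mul_le_mul_of_nonneg_left hinner hη
    linarith
  have hpos : 0 < μ ^ 2 * ‖xk - xhat‖ ^ 4 / ‖zk‖ ^ 2 := by positivity
  exact ⟨hmain, by linarith⟩
end

section
/- Let J = f + αg be μ-strongly convex with f convex differentiable with L_{∇f}-Lipschitz gradient, g convex L_g-Lipschitz, and unique minimizer x̂. Consider updates x_{k+1} = x_k − η_k* z_k where z_k = ∇f(x_k) + u_k with u_k a subgradient of αg at x_k and η_k* = μ ‖x_k − x̂‖²_X / ‖z_k‖²_X (taking η_k* = 0 if z_k = 0). Then the squared errors e_k = ‖x_k − x̂‖²_X satisfy the recursion e_{k+1} ≤ e_k − μ² e_k² / (2 L_{∇f}² e_k + 4 α L_g L_{∇f} √e_k + 4 α² L_g²). -/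
/-!
Put `r = ‖x k - xhat‖`, so that `e k = r ^ 2`. Strong convexity is used twice: the vector
`z k = f' (x k) + u k` is a subgradient of `J` at `x k`, and `xhat` minimises `J`; adding the
two resulting quadratic growth inequalities gives `μ * r ^ 2 ≤ ⟪z k, x k - xhat⟫`
(`strong_monotone_at_minimizer`). Expanding the square with the chosen step size yields
`e (k + 1) ≤ e k - μ ^ 2 * (e k) ^ 2 / ‖z k‖ ^ 2`.

It remains to bound `‖z k‖`. Subgradients of `α g` have norm at most `α Lg`
(`norm_subgradient_le`), and so has `f' xhat` by first-order optimality
(`norm_gradient_minimizer_le`). Hence `‖z k‖ ≤ Lf * r + 2 * α * Lg`, whose square is at most the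
denominator in the claim.
-/

open Classical RealInnerProductSpace

/-- A one-sided bound on difference quotients, with an error linear in `t`, passes to the
derivative. With `φ` constant it reads: `0 ≤ a + b * t` for small `t > 0` implies `0 ≤ a`. -/
lemma deriv_le_of_quadratic_bound {φ : ℝ → ℝ} {m a b : ℝ} (hφ : HasDerivAt φ m 0)
    (h : ∀ t : ℝ, 0 < t → t < 1 → φ t - φ 0 ≤ t * (a + b * t)) : m ≤ a := by
  have h1 : Filter.Tendsto (fun t : ℝ => t⁻¹ • (φ (0 + t) - φ 0)) (nhdsWithin 0 (Set.Ioi 0))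
      (nhds m) := hφ.tendsto_slope_zero_right
  have h2 : Filter.Tendsto (fun t : ℝ => a + b * t) (nhdsWithin 0 (Set.Ioi 0)) (nhds a) := by
    have hc : Continuous (fun t : ℝ => a + b * t) := by fun_prop
    simpa using (hc.tendsto 0).mono_left nhdsWithin_le_nhds
  refine le_of_tendsto_of_tendsto h1 h2 ?_
  filter_upwards [Ioo_mem_nhdsGT (zero_lt_one' ℝ)] with t ht
  rw [zero_add, smul_eq_mul, inv_mul_le_iff₀ ht.1]
  exact h t ht.1 ht.2

section Aux

variable {X : Type*} [NormedAddCommGroup X] [InnerProductSpace ℝ X]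

lemma hasDerivAt_along_line [CompleteSpace X] {f : X → ℝ} {p y : X}
    (h : HasGradientAt f p y) (d : X) :
    HasDerivAt (fun t : ℝ => f (y + t • d)) ⟪p, d⟫ 0 := by
  have h1 : HasDerivAt (fun t : ℝ => y + t • d) d 0 := by
    simpa using ((hasDerivAt_id (0 : ℝ)).smul_const d).const_add y
  have h2 : HasFDerivAt f (InnerProductSpace.toDual ℝ X p) (y + (0 : ℝ) • d) := by
    simpa using h.hasFDerivAt
  exact h2.comp_hasDerivAt (0 : ℝ) h1

/-- Strong convexity of `J` along the segment from `y` to `w`. -/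
lemma strongConvex_segment {J : X → ℝ} {μ : ℝ} (hsc : StrongConvexOn Set.univ μ J)
    (y w : X) {t : ℝ} (h0 : 0 < t) (h1 : t < 1) :
    J (y + t • (w - y)) ≤ (1 - t) * J y + t * J w - (1 - t) * t * (μ / 2 * ‖y - w‖ ^ 2) := by
  have h := hsc.2 (Set.mem_univ y) (Set.mem_univ w) (sub_nonneg.2 h1.le) h0.le
    (sub_add_cancel 1 t)
  have heq : (1 - t) • y + t • w = y + t • (w - y) := by module
  rw [heq] at h
  simpa only [smul_eq_mul] using h

/-- Testing the subgradient inequality at `y + u` bounds the subgradient by the Lipschitz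
constant. -/
lemma norm_subgradient_le {g : X → ℝ} {Lg α : ℝ} (hLg : 0 ≤ Lg)
    (hglip : ∀ x y : X, |g x - g y| ≤ Lg * ‖x - y‖) (hα : 0 < α) {y u : X}
    (hu : ∀ v : X, α * g v ≥ α * g y + ⟪v - y, u⟫) : ‖u‖ ≤ α * Lg := by
  have h := hu (y + u)
  rw [add_sub_cancel_left, real_inner_self_eq_norm_sq] at h
  have h2 := (le_abs_self _).trans (hglip (y + u) y)
  rw [add_sub_cancel_left] at h2
  have h3 := mul_le_mul_of_nonneg_left h2 hα.le
  by_contra! hc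
  have hnn : 0 ≤ α * Lg := by positivity
  nlinarith

/-- First-order optimality at a minimiser of `f + α g`: there `-∇f` is a subgradient of `α g`,
so it obeys the Lipschitz bound of `α g`. The proof moves from the minimiser in the direction
`-∇f`. -/
lemma norm_gradient_minimizer_le [CompleteSpace X] {f g : X → ℝ} {Lg α : ℝ} (hLg : 0 ≤ Lg)
    (hglip : ∀ x y : X, |g x - g y| ≤ Lg * ‖x - y‖) (hα : 0 < α) {y p : X}
    (hf : HasGradientAt f p y) (hmin : ∀ x : X, f y + α * g y ≤ f x + α * g x) :
    ‖p‖ ≤ α * Lg := by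
  have h : -⟪p, -p⟫ ≤ α * Lg * ‖p‖ := by
    refine deriv_le_of_quadratic_bound (b := 0) (hasDerivAt_along_line hf (-p)).neg ?_
    intro t h0 _
    have h1 := hmin (y + t • (-p))
    have h2 := (le_abs_self _).trans (hglip (y + t • (-p)) y)
    rw [add_sub_cancel_left, norm_smul, norm_neg, Real.norm_of_nonneg h0.le] at h2
    have h3 := mul_le_mul_of_nonneg_left h2 hα.le
    simp only [Pi.neg_apply, zero_smul, add_zero]
    nlinarith
  rw [inner_neg_right, neg_neg, real_inner_self_eq_norm_sq] at h
  by_contra! hc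
  have hnn : 0 ≤ α * Lg := by positivity
  nlinarith

/-- Strong monotonicity of the subdifferential of `J = f + α g` between `y` and a minimiser `w`,
where `0` is a subgradient. -/
lemma strong_monotone_at_minimizer [CompleteSpace X] {f g J : X → ℝ} {α μ : ℝ}
    (hJ : ∀ x, J x = f x + α * g x) (hsc : StrongConvexOn Set.univ μ J) {y w p u : X}
    (hf : HasGradientAt f p y) (hmin : ∀ x : X, J w ≤ J x)
    (hu : ∀ v : X, α * g v ≥ α * g y + ⟪v - y, u⟫) :
    μ * ‖y - w‖ ^ 2 ≤ ⟪p + u, y - w⟫ := by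
  have hA : ⟪p, w - y⟫ ≤ J w - J y - ⟪w - y, u⟫ - μ / 2 * ‖y - w‖ ^ 2 := by
    refine deriv_le_of_quadratic_bound (b := μ / 2 * ‖y - w‖ ^ 2)
      (hasDerivAt_along_line hf (w - y)) ?_
    intro t h0 h1
    have h2 := strongConvex_segment hsc y w h0 h1
    have h3 := hu (y + t • (w - y))
    rw [add_sub_cancel_left, real_inner_smul_left] at h3
    rw [hJ (y + t • (w - y))] at h2
    have h4 := hJ y
    simp only [zero_smul, add_zero]
    linear_combination h2 + h3 + h4
  have hB : 0 ≤ J y - J w - μ / 2 * ‖w - y‖ ^ 2 := by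
    refine deriv_le_of_quadratic_bound (b := μ / 2 * ‖w - y‖ ^ 2)
      (hasDerivAt_const (0 : ℝ) (0 : ℝ)) ?_
    intro t h0 h1
    have h2 := strongConvex_segment hsc w y h0 h1
    have h3 := hmin (w + t • (y - w))
    linear_combination h2 + h3
  rw [norm_sub_rev w y] at hB
  have h5 : ⟪p + u, y - w⟫ = -⟪p, w - y⟫ - ⟪w - y, u⟫ := by
    rw [inner_add_left, ← neg_sub w y, inner_neg_right, inner_neg_right, real_inner_comm u]
    ring
  rw [h5]
  linarith

end Aux

/-- For the sub-gradient method with optimal step sizes applied to the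
`μ`-strongly convex `J = f + αg` (`f` with `L_{∇f}`-Lipschitz gradient, `g` `L_g`-Lipschitz),
the squared errors `e_k = ‖x_k − x̂‖²` satisfy
`e_{k+1} ≤ e_k − μ² e_k² / (2 L_{∇f}² e_k + 4 α L_g L_{∇f} √e_k + 4 α² L_g²)`. -/
theorem subgradient_method_error_recursion
    {X : Type*} [NormedAddCommGroup X] [InnerProductSpace ℝ X] [CompleteSpace X]
    (f : X → ℝ) (f' : X → X)
    (hfconv : ConvexOn ℝ Set.univ f)
    (hfgrad : ∀ x : X, HasGradientAt f (f' x) x)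
    (Lf : ℝ) (hLf : 0 ≤ Lf) (hf'lip : ∀ x y : X, ‖f' x - f' y‖ ≤ Lf * ‖x - y‖)
    (g : X → ℝ) (hgconv : ConvexOn ℝ Set.univ g)
    (Lg : ℝ) (hLg : 0 ≤ Lg) (hglip : ∀ x y : X, |g x - g y| ≤ Lg * ‖x - y‖)
    (α : ℝ) (hα : 0 < α)
    (J : X → ℝ) (hJ : ∀ x, J x = f x + α * g x)
    (μ : ℝ) (hμ : 0 < μ)
    (hsc : StrongConvexOn Set.univ μ J)
    (xhat : X) (hmin : ∀ x : X, J xhat ≤ J x)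
    (x u : ℕ → X)
    (hu : ∀ k : ℕ, ∀ v : X, α * g v ≥ α * g (x k) + ⟪v - x k, u k⟫)
    (z : ℕ → X) (hz : ∀ k, z k = f' (x k) + u k)
    (η : ℕ → ℝ)
    (hη : ∀ k, η k = if z k = 0 then 0 else μ * ‖x k - xhat‖ ^ 2 / ‖z k‖ ^ 2)
    (hstep : ∀ k, x (k + 1) = x k - η k • z k)
    (e : ℕ → ℝ) (he : ∀ k, e k = ‖x k - xhat‖ ^ 2) :
    ∀ k : ℕ, e (k + 1) ≤ e k -
      μ ^ 2 * (e k) ^ 2 /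
        (2 * Lf ^ 2 * e k + 4 * α * Lg * Lf * Real.sqrt (e k) + 4 * α ^ 2 * Lg ^ 2) := by
  intro k
  have hmono : μ * ‖x k - xhat‖ ^ 2 ≤ ⟪z k, x k - xhat⟫ := by
    rw [hz]
    exact strong_monotone_at_minimizer hJ hsc (hfgrad (x k)) hmin (hu k)
  have hub := norm_subgradient_le hLg hglip hα (hu k)
  have hpb := norm_gradient_minimizer_le hLg hglip hα (hfgrad xhat)
    (fun v => by rw [← hJ, ← hJ]; exact hmin v)
  have hzb : ‖z k‖ ≤ Lf * ‖x k - xhat‖ + 2 * (α * Lg) := by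
    have h1 : z k = (f' (x k) - f' xhat) + f' xhat + u k := by rw [hz]; abel
    have h2 := hf'lip (x k) xhat
    rw [h1]
    linarith [norm_add₃_le (a := f' (x k) - f' xhat) (b := f' xhat) (c := u k)]
  rw [he, he, hstep, Real.sqrt_sq (norm_nonneg _)]
  set r := ‖x k - xhat‖ with hr
  have hr0 : 0 ≤ r := norm_nonneg _
  by_cases h0 : z k = 0
  · -- Here `z k = 0` forces `r = 0`, and the subtracted fraction has numerator `0`.
    rw [h0, inner_zero_left] at hmono
    have hr2 : r ^ 2 = 0 := le_antisymm (by nlinarith) (sq_nonneg r)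
    rw [h0, smul_zero, sub_zero, ← hr, hr2]
    simp
  · have hz0 : 0 < ‖z k‖ := norm_pos_iff.2 h0
    have hD : ‖z k‖ ^ 2 ≤
        2 * Lf ^ 2 * r ^ 2 + 4 * α * Lg * Lf * r + 4 * α ^ 2 * Lg ^ 2 := by
      have := pow_le_pow_left₀ hz0.le hzb 2
      nlinarith [sq_nonneg (Lf * r)]
    have hexp : ‖x k - η k • z k - xhat‖ ^ 2 =
        r ^ 2 - 2 * η k * ⟪z k, x k - xhat⟫ + η k ^ 2 * ‖z k‖ ^ 2 := by
      rw [sub_right_comm, norm_sub_sq_real, real_inner_smul_right, norm_smul, mul_pow,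
        Real.norm_eq_abs, sq_abs, real_inner_comm]
      ring
    have hηk : η k = μ * r ^ 2 / ‖z k‖ ^ 2 := by rw [hη, if_neg h0]
    have hη0 : 0 ≤ η k := by rw [hηk]; positivity
    have hη1 : η k * ‖z k‖ ^ 2 = μ * r ^ 2 := by rw [hηk]; field_simp
    have hη2 : η k * (μ * r ^ 2) = μ ^ 2 * (r ^ 2) ^ 2 / ‖z k‖ ^ 2 := by rw [hηk]; ring
    have hdiv := div_le_div_of_nonneg_left
      (by positivity : 0 ≤ μ ^ 2 * (r ^ 2) ^ 2) (by positivity) hD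
    have h1 := mul_le_mul_of_nonneg_left hmono hη0
    rw [hexp]
    have h2 : η k ^ 2 * ‖z k‖ ^ 2 = η k * (μ * r ^ 2) := by rw [← hη1]; ring
    linarith
end

section
/- Let μ > 0, L > 0, c ≥ 0, d > 0, and let (e_k) be a sequence of nonnegative reals satisfying e_{k+1} ≤ e_k − μ² e_k² / (2 L² e_k + c √e_k + d) for all k. Then (e_k) is nonincreasing and converges to 0. -/
/-!
The subtracted term is nonnegative, so `e` is nonincreasing and bounded below by `0`, hence
converges to some `l ≥ 0`. Since `d > 0`, the denominator is positive on `[0, ∞)`, so the right-hand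
side of the recursion is continuous there. In the limit the recursion forces
`μ² l² / (2 L² l + c √l + d) ≤ 0`, that is, `l = 0`.
-/

/-- If `(e_k)` is a nonnegative real sequence satisfying
`e_{k+1} ≤ e_k − μ² e_k² / (2 L² e_k + c √e_k + d)` with `μ, L, d > 0` and `c ≥ 0`, then
`(e_k)` is nonincreasing and converges to `0`. -/
theorem error_sequence_tendsto_zero
    (μ L c d : ℝ) (hμ : 0 < μ) (hL : 0 < L) (hc : 0 ≤ c) (hd : 0 < d)
    (e : ℕ → ℝ) (he : ∀ k, 0 ≤ e k)
    (hrec : ∀ k, e (k + 1) ≤ e k -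
      μ ^ 2 * (e k) ^ 2 / (2 * L ^ 2 * e k + c * Real.sqrt (e k) + d)) :
    (∀ k, e (k + 1) ≤ e k) ∧ Filter.Tendsto e Filter.atTop (nhds 0) := by
  have hden : ∀ x : ℝ, 0 ≤ x → 0 < 2 * L ^ 2 * x + c * Real.sqrt x + d := fun x hx => by
    positivity
  have hmono : ∀ k, e (k + 1) ≤ e k := fun k => by
    have hdec : 0 ≤ μ ^ 2 * (e k) ^ 2 / (2 * L ^ 2 * e k + c * Real.sqrt (e k) + d) :=
      div_nonneg (by positivity) (hden _ (he k)).le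
    linarith [hrec k]
  refine ⟨hmono, ?_⟩
  obtain ⟨l, hl⟩ : ∃ l, Filter.Tendsto e Filter.atTop (nhds l) :=
    ⟨_, tendsto_atTop_ciInf (antitone_nat_of_succ_le hmono)
      ⟨0, by rintro _ ⟨k, rfl⟩; exact he k⟩⟩
  have hl0 : 0 ≤ l := ge_of_tendsto' hl he
  have hlim : l ≤ l - μ ^ 2 * l ^ 2 / (2 * L ^ 2 * l + c * Real.sqrt l + d) := by
    refine le_of_tendsto_of_tendsto' (hl.comp (Filter.tendsto_add_atTop_nat 1)) ?_ hrec
    exact hl.sub (((hl.pow 2).const_mul _).div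
      (((hl.const_mul _).add (hl.sqrt.const_mul _)).add_const d) (hden l hl0).ne')
  have hl_eq : l = 0 := by
    by_contra hne
    have hdec : 0 < μ ^ 2 * l ^ 2 / (2 * L ^ 2 * l + c * Real.sqrt l + d) :=
      div_pos (by positivity) (hden l hl0)
    linarith
  rwa [hl_eq] at hl
end

section
/- Let J = f + αg be μ-strongly convex with f convex differentiable with L_{∇f}-Lipschitz gradient and g convex L_g-Lipschitz, and let x̂ denote the unique minimizer of J. Starting from any x₀ ∈ X, the sub-gradient iterates x_{k+1} = x_k − η_k* z_k with z_k = ∇f(x_k) + u_k, u_k a subgradient of αg at x_k, and η_k* = μ ‖x_k − x̂‖²_X / ‖z_k‖²_X (η_k* = 0 if z_k = 0), converge to x̂ in the norm of X: lim_{k→∞} ‖x_k − x̂‖_X = 0, with monotonically decreasing error ‖x_k − x̂‖_X. -/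
/-!
Set `d k = ‖x k - xhat‖`. Each `z k` is a subgradient of `J` at `x k`, and a subgradient of a
strongly convex function satisfies the subgradient inequality with the additional quadratic term
`μ / 2 * ‖v - x‖ ^ 2` (`subgradient_strong`). Adding this inequality at `x k` (slope `z k`) and at
the minimizer (slope `0`) gives the strong monotonicity bound `μ * d k ^ 2 ≤ ⟪x k - xhat, z k⟫`.
Expanding the square in the update, the chosen step size `η k` then yields
`d (k + 1) ^ 2 ≤ d k ^ 2 - μ ^ 2 * d k ^ 4 / ‖z k‖ ^ 2`, so the error decreases. Along a sequence with
bounded error the slopes `z k` are bounded by some `B`, since `∇f` and `g` are Lipschitz; hence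
`s k = d k ^ 2` satisfies `s (k + 1) ≤ s k - c * s k ^ 2` with `c = μ ^ 2 / B ^ 2 > 0`, which forces
`s k → 0` (`tendsto_zero_of_quadratic_decrease`).
-/

open Classical RealInnerProductSpace

/-- First-order characterization of convexity, obtained by restricting `f` to the line through
`x` and `v`. -/
lemma convex_gradient_inequality
    {X : Type*} [NormedAddCommGroup X] [InnerProductSpace ℝ X] [CompleteSpace X]
    {f : X → ℝ} (hf : ConvexOn ℝ Set.univ f) {x p : X} (hp : HasGradientAt f p x) (v : X) :
    f x + ⟪v - x, p⟫ ≤ f v := by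
  have hconv : ConvexOn ℝ Set.univ (fun t : ℝ => f (AffineMap.lineMap x v t)) :=
    hf.comp_affineMap (AffineMap.lineMap x v)
  have hder : HasDerivAt (fun t : ℝ => f (AffineMap.lineMap x v t)) ⟪p, v - x⟫ 0 := by
    have h1 : HasDerivAt (fun t : ℝ => (AffineMap.lineMap x v t : X)) (v - x) 0 :=
      AffineMap.hasDerivAt_lineMap
    have h2 : HasFDerivAt f (InnerProductSpace.toDual ℝ X p) (AffineMap.lineMap x v (0 : ℝ)) := by
      simpa using hp.hasFDerivAt
    have h3 := h2.comp_hasDerivAt (0 : ℝ) h1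
    rw [InnerProductSpace.toDual_apply_apply] at h3
    exact h3
  have h := hconv.le_slope_of_hasDerivAt (Set.mem_univ 0) (Set.mem_univ 1) one_pos hder
  simp only [slope_def_field, AffineMap.lineMap_apply_zero, AffineMap.lineMap_apply_one, sub_zero,
    div_one] at h
  rw [real_inner_comm]
  linarith

/-- A subgradient of a strongly convex function satisfies the subgradient inequality with an
additional quadratic term: compare strong convexity on the segment from `x` to `v` with the
subgradient inequality at `x + t • (v - x)`, divide by `t` and let `t → 0`. -/
lemma subgradient_strong
    {X : Type*} [NormedAddCommGroup X] [InnerProductSpace ℝ X]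
    {J : X → ℝ} {μ : ℝ} (hsc : StrongConvexOn Set.univ μ J) {x p : X}
    (hp : ∀ v : X, J x + ⟪v - x, p⟫ ≤ J v) (v : X) :
    J x + ⟪v - x, p⟫ + μ / 2 * ‖v - x‖ ^ 2 ≤ J v := by
  have key : ∀ t : ℝ, 0 < t → t < 1 →
      (1 - t) * (μ / 2 * ‖v - x‖ ^ 2) ≤ J v - J x - ⟪v - x, p⟫ := by
    intro t ht ht1
    have h1 := hsc.2 (Set.mem_univ x) (Set.mem_univ v) (sub_nonneg.2 ht1.le) ht.le (by ring)
    have h2 := hp ((1 - t) • x + t • v)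
    have h3 : (1 - t) • x + t • v - x = t • (v - x) := by module
    rw [h3, real_inner_smul_left] at h2
    rw [norm_sub_rev x v] at h1
    simp only [smul_eq_mul] at h1
    refine le_of_mul_le_mul_left ?_ ht
    linarith
  have hlim : Filter.Tendsto (fun t : ℝ => (1 - t) * (μ / 2 * ‖v - x‖ ^ 2)) (nhdsWithin 0 (Set.Ioi 0))
      (nhds ((1 - 0) * (μ / 2 * ‖v - x‖ ^ 2))) :=
    (Continuous.tendsto (by fun_prop) (0 : ℝ)).mono_left nhdsWithin_le_nhds
  have h := le_of_tendsto hlim <| by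
    filter_upwards [Ioo_mem_nhdsGT (zero_lt_one (α := ℝ))] with t ht
    exact key t ht.1 ht.2
  linarith

/-- The sequence is nonincreasing, hence convergent, and its limit `l` satisfies
`l ≤ l - c * l ^ 2`. -/
lemma tendsto_zero_of_quadratic_decrease {s : ℕ → ℝ} {c : ℝ} (hc : 0 < c) (hs : ∀ k, 0 ≤ s k)
    (h : ∀ k, s (k + 1) ≤ s k - c * s k ^ 2) :
    Filter.Tendsto s Filter.atTop (nhds 0) := by
  have hanti : Antitone s := antitone_nat_of_succ_le fun k => by
    have := mul_nonneg hc.le (sq_nonneg (s k))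
    linarith [h k]
  have hl := tendsto_atTop_ciInf hanti ⟨0, by rintro _ ⟨k, rfl⟩; exact hs k⟩
  set l := ⨅ k, s k
  have hle : l ≤ l - c * l ^ 2 :=
    le_of_tendsto_of_tendsto' (hl.comp (Filter.tendsto_add_atTop_nat 1))
      (hl.sub ((hl.pow 2).const_mul c)) h
  have hl0 : l = 0 := by
    have : l ^ 2 ≤ 0 := by
      by_contra! hpos
      linarith [mul_pos hc hpos]
    exact pow_eq_zero_iff two_ne_zero |>.1 (le_antisymm this (sq_nonneg l))
  rwa [hl0] at hl

/-- Testing the subgradient inequality at `x + p` bounds subgradients by the Lipschitz constant. -/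
lemma norm_subgradient_le_s17
    {X : Type*} [NormedAddCommGroup X] [InnerProductSpace ℝ X]
    {G : X → ℝ} {L : ℝ} (hL : 0 ≤ L) (hG : ∀ x y : X, |G x - G y| ≤ L * ‖x - y‖) {x p : X}
    (hp : ∀ v : X, G x + ⟪v - x, p⟫ ≤ G v) : ‖p‖ ≤ L := by
  have h1 := hp (x + p)
  have h2 := (le_abs_self _).trans (hG (x + p) x)
  rw [add_sub_cancel_left] at h1 h2
  rw [real_inner_self_eq_norm_sq] at h1
  by_contra! hlt
  nlinarith [norm_nonneg p]

/-- Convergence of sub-gradient updates: For the `μ`-strongly convex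
`J = f + αg` with unique minimizer `x̂` (`f` convex with `L_{∇f}`-Lipschitz gradient, `g`
convex and `L_g`-Lipschitz), the sub-gradient iterates `x_{k+1} = x_k − η_k* z_k` with
`z_k = ∇f(x_k) + u_k`, `u_k` a subgradient of `αg` at `x_k`, and
`η_k* = μ ‖x_k − x̂‖² / ‖z_k‖²` (`η_k* = 0` if `z_k = 0`) converge to `x̂` in norm, with
monotonically decreasing error `‖x_k − x̂‖`. -/
theorem subgradient_method_converges
    {X : Type*} [NormedAddCommGroup X] [InnerProductSpace ℝ X] [CompleteSpace X]
    (f : X → ℝ) (f' : X → X)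
    (hfconv : ConvexOn ℝ Set.univ f)
    (hfgrad : ∀ x : X, HasGradientAt f (f' x) x)
    (Lf : ℝ) (hLf : 0 ≤ Lf) (hf'lip : ∀ x y : X, ‖f' x - f' y‖ ≤ Lf * ‖x - y‖)
    (g : X → ℝ) (hgconv : ConvexOn ℝ Set.univ g)
    (Lg : ℝ) (hLg : 0 ≤ Lg) (hglip : ∀ x y : X, |g x - g y| ≤ Lg * ‖x - y‖)
    (α : ℝ) (hα : 0 < α)
    (J : X → ℝ) (hJ : ∀ x, J x = f x + α * g x)
    (μ : ℝ) (hμ : 0 < μ)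
    (hsc : StrongConvexOn Set.univ μ J)
    (xhat : X) (hmin : ∀ x : X, J xhat ≤ J x)
    (x u : ℕ → X)
    (hu : ∀ k : ℕ, ∀ v : X, α * g v ≥ α * g (x k) + ⟪v - x k, u k⟫)
    (z : ℕ → X) (hz : ∀ k, z k = f' (x k) + u k)
    (η : ℕ → ℝ)
    (hη : ∀ k, η k = if z k = 0 then 0 else μ * ‖x k - xhat‖ ^ 2 / ‖z k‖ ^ 2)
    (hstep : ∀ k, x (k + 1) = x k - η k • z k) :
    (∀ k, ‖x (k + 1) - xhat‖ ≤ ‖x k - xhat‖) ∧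
      Filter.Tendsto (fun k => ‖x k - xhat‖) Filter.atTop (nhds 0) := by
  have hz_sub : ∀ k v, J (x k) + ⟪v - x k, z k⟫ ≤ J v := by
    intro k v
    have h1 := convex_gradient_inequality hfconv (hfgrad (x k)) v
    have h2 := hu k v
    rw [hJ, hJ, hz, inner_add_right]
    linarith
  have hmono : ∀ k, μ * ‖x k - xhat‖ ^ 2 ≤ ⟪x k - xhat, z k⟫ := by
    intro k
    have h1 := subgradient_strong hsc (hz_sub k) xhat
    have h2 := subgradient_strong hsc (x := xhat) (p := 0) (by simpa using hmin) (x k)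
    rw [inner_zero_right] at h2
    rw [norm_sub_rev xhat, ← neg_sub (x k) xhat, inner_neg_left] at h1
    linarith
  -- For `z k = 0` the quotient is `0` by convention, and the inequality is an equality.
  have hdec : ∀ k, ‖x (k + 1) - xhat‖ ^ 2 ≤
      ‖x k - xhat‖ ^ 2 - (μ * ‖x k - xhat‖ ^ 2) ^ 2 / ‖z k‖ ^ 2 := by
    intro k
    by_cases h0 : z k = 0
    · simp [hstep k, h0]
    have hzpos : 0 < ‖z k‖ := norm_pos_iff.2 h0
    have hη_nonneg : 0 ≤ η k := by rw [hη, if_neg h0]; positivity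
    have hη_mul : η k * ‖z k‖ ^ 2 = μ * ‖x k - xhat‖ ^ 2 := by
      rw [hη, if_neg h0]; field_simp
    have hquot : (μ * ‖x k - xhat‖ ^ 2) ^ 2 / ‖z k‖ ^ 2 = η k * (μ * ‖x k - xhat‖ ^ 2) := by
      rw [hη, if_neg h0]; field_simp
    have hexp : ‖x (k + 1) - xhat‖ ^ 2 =
        ‖x k - xhat‖ ^ 2 - 2 * (η k * ⟪x k - xhat, z k⟫) + η k * (η k * ‖z k‖ ^ 2) := by
      rw [hstep, sub_right_comm, norm_sub_sq_real, real_inner_smul_right, norm_smul, mul_pow,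
        Real.norm_eq_abs, sq_abs]
      ring
    rw [hexp, hη_mul, hquot]
    linarith [mul_le_mul_of_nonneg_left (hmono k) hη_nonneg]
  have hstep_le : ∀ k, ‖x (k + 1) - xhat‖ ≤ ‖x k - xhat‖ := by
    intro k
    refine le_of_sq_le_sq ?_ (norm_nonneg _)
    have : 0 ≤ (μ * ‖x k - xhat‖ ^ 2) ^ 2 / ‖z k‖ ^ 2 := by positivity
    linarith [hdec k]
  refine ⟨hstep_le, ?_⟩
  have hle0 : ∀ k, ‖x k - xhat‖ ≤ ‖x 0 - xhat‖ := fun k =>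
    antitone_nat_of_succ_le (f := fun k => ‖x k - xhat‖) hstep_le (Nat.zero_le k)
  have hu_norm : ∀ k, ‖u k‖ ≤ α * Lg := fun k =>
    norm_subgradient_le_s17 (G := fun v => α * g v) (by positivity)
      (fun a b => by
        rw [← mul_sub, abs_mul, abs_of_pos hα, mul_assoc]
        exact mul_le_mul_of_nonneg_left (hglip a b) hα.le)
      (hu k)
  -- The summand `1` makes the bound positive.
  obtain ⟨B, hB, hzB⟩ : ∃ B : ℝ, 0 < B ∧ ∀ k, ‖z k‖ ≤ B := by
    refine ⟨‖f' xhat‖ + Lf * ‖x 0 - xhat‖ + α * Lg + 1, by positivity, fun k => ?_⟩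
    have h1 : ‖f' (x k)‖ ≤ ‖f' xhat‖ + ‖f' (x k) - f' xhat‖ := norm_le_insert' _ _
    have h2 := hf'lip (x k) xhat
    have h3 := mul_le_mul_of_nonneg_left (hle0 k) hLf
    have h4 := norm_add_le (f' (x k)) (u k)
    rw [hz]
    linarith [hu_norm k]
  have hsq : Filter.Tendsto (fun k => ‖x k - xhat‖ ^ 2) Filter.atTop (nhds 0) := by
    refine tendsto_zero_of_quadratic_decrease (c := μ ^ 2 / B ^ 2) (by positivity)
      (fun k => by positivity) fun k => (hdec k).trans (sub_le_sub_left ?_ _)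
    by_cases h0 : z k = 0
    · -- Here the quotient by `‖z k‖ ^ 2` is the junk value `0`, but the error vanishes as well.
      have h := hmono k
      rw [h0, inner_zero_right] at h
      have hd : ‖x k - xhat‖ ^ 2 = 0 :=
        le_antisymm (nonpos_of_mul_nonpos_right h hμ) (sq_nonneg _)
      simp [hd]
    · have hzpos : 0 < ‖z k‖ := norm_pos_iff.2 h0
      rw [div_mul_eq_mul_div, ← mul_pow]
      gcongr
      exact hzB k
  simpa using hsq.sqrt
end

section
/- The output of an input-convex neural network is convex in its input: fix L ≥ 0, dimensions n₀ = n (input), n₁, …, n_{L+1}, matrices B_i ∈ ℝ^{n_{i+1}×n_i} with all entries nonnegative, matrices W_i ∈ ℝ^{n_{i+1}×n} and biases b_i ∈ ℝ^{n_{i+1}} for i = 0, …, L, and convex monotonically nondecreasing activations φ_i : ℝ → ℝ applied componentwise. Define z₀(x) = 0 and z_{i+1}(x) = φ_i(B_i z_i(x) + W_i x + b_i) recursively. Then the scalar function R'(x) := (1/n_{L+1}) Σ_{j=1}^{n_{L+1}} (z_{L+1}(x))_j obtained by global average pooling is a convex function of x ∈ ℝⁿ. -/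
/-! The scalar components of every layer are convex in the input, by induction on the layer.
A preactivation is a nonnegative combination of the previous components (this is where the
nonnegativity of `B` enters) plus an affine function of the input, so it is convex; composing
a convex function with a convex nondecreasing `φ` keeps it convex. The average pooling is a
nonnegative combination of the components of the last layer. -/

theorem convexOn_sum_mul {E ι : Type*} [AddCommGroup E] [Module ℝ E] [Fintype ι]
    (c : ι → ℝ) (hc : ∀ k, 0 ≤ c k) (f : ι → E → ℝ)
    (hf : ∀ k, ConvexOn ℝ Set.univ (f k)) :
    ConvexOn ℝ Set.univ fun x => ∑ k, c k * f k x := by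
  refine ⟨convex_univ, fun x _ y _ s t hs ht hst => ?_⟩
  simp only [smul_eq_mul]
  rw [Finset.mul_sum, Finset.mul_sum, ← Finset.sum_add_distrib]
  refine Finset.sum_le_sum fun k _ => ?_
  have h := mul_le_mul_of_nonneg_left
    ((hf k).2 (Set.mem_univ x) (Set.mem_univ y) hs ht hst) (hc k)
  simp only [smul_eq_mul] at h
  linarith

theorem convexOn_comp_of_monotone {E : Type*} [AddCommGroup E] [Module ℝ E]
    {φ : ℝ → ℝ} (hφ : ConvexOn ℝ Set.univ φ) (hmono : Monotone φ)
    {g : E → ℝ} (hg : ConvexOn ℝ Set.univ g) :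
    ConvexOn ℝ Set.univ fun x => φ (g x) :=
  ⟨convex_univ, fun _ _ _ _ _ _ hs ht hst =>
    (hmono (hg.2 trivial trivial hs ht hst)).trans (hφ.2 trivial trivial hs ht hst)⟩


/-- The output of an input-convex neural network is convex in its input: with
layers `z₀(x) = 0`, `z_{i+1}(x) = φ_i(B_i z_i(x) + W_i x + b_i)` for `i = 0, …, L`, where each
`B_i` has nonnegative entries and each `φ_i` is convex and monotonically nondecreasing, the
global average pooling `R'(x) = (1/n_{L+1}) Σ_j (z_{L+1}(x))_j` is a convex function of `x`. -/
theorem icnn_output_is_convex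
    (L : ℕ) (d : ℕ → ℕ)
    (B : ∀ i : ℕ, Matrix (Fin (d (i + 1))) (Fin (d i)) ℝ)
    (hB : ∀ i ≤ L, ∀ j k, 0 ≤ B i j k)
    (W : ∀ i : ℕ, Matrix (Fin (d (i + 1))) (Fin (d 0)) ℝ)
    (b : ∀ i : ℕ, Fin (d (i + 1)) → ℝ)
    (φ : ℕ → ℝ → ℝ)
    (hφconv : ∀ i ≤ L, ConvexOn ℝ Set.univ (φ i))
    (hφmono : ∀ i ≤ L, Monotone (φ i))
    (z : ∀ i : ℕ, (Fin (d 0) → ℝ) → Fin (d i) → ℝ)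
    (hz0 : ∀ x, z 0 x = 0)
    (hzrec : ∀ i ≤ L, ∀ x, z (i + 1) x
      = fun j => φ i (((B i).mulVec (z i x) + (W i).mulVec x + b i) j)) :
    ConvexOn ℝ Set.univ fun x =>
      (1 / (d (L + 1) : ℝ)) * ∑ j : Fin (d (L + 1)), z (L + 1) x j := by
  have key : ∀ i ≤ L + 1, ∀ j, ConvexOn ℝ Set.univ fun x => z i x j := by
    intro i
    induction i with
    | zero =>
      intro _ j
      simpa only [hz0, Pi.zero_apply] using convexOn_const (0 : ℝ) convex_univ
    | succ i ih =>
      intro hi j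
      have hiL : i ≤ L := by omega
      simp only [hzrec i hiL]
      refine convexOn_comp_of_monotone (hφconv i hiL) (hφmono i hiL) ?_
      have hBz := convexOn_sum_mul (B i j) (hB i hiL j) (fun k x => z i x k) (ih (by omega))
      have hW : ConvexOn ℝ Set.univ fun x => (W i).mulVec x j :=
        ((LinearMap.proj j).comp (W i).mulVecLin).convexOn convex_univ
      exact (hBz.add hW).add_const (b i j)
  simp only [Finset.mul_sum]
  exact convexOn_sum_mul (fun _ => 1 / (d (L + 1) : ℝ)) (fun _ => by positivity)
    (fun j x => z (L + 1) x j) (key (L + 1) le_rfl)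
end
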